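/- Let v₀ > 0 and let v : [0,T] → ℝ solve the scattering-free two-photon Riccati equation with initial value v₀. Then for every s ∈ [0,T], v(s) ≥ v₀ · exp(−∫₀^{s} (σ_a(r) + v₀·σ_b(r)) dr). In particular v(s) ≥ C·v₀ with C = exp(−∫₀^{T} (σ_a + v₀·σ_b)) > 0, the scattering-free analogue of the positive lower bound of the well-posedness lemma. -/

import Mathlib

/-!
Along a solution the equation is linear with coefficient `k = σa + σb v`: `v' = -k v`. Hence the
integrating factor gives the exact representation `v s = v0 * exp (-∫₀ˢ k)`
(`SolvesRiccati.eq_mul_exp`). This shows first `v > 0`, so `k ≥ 0`, and then, by the same formula,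
`v ≤ v0`. Therefore `k ≤ σa + v0 σb`, and inserting this bound into the representation gives the
pointwise lower bound. The uniform bound follows because `∫₀ˢ (σa + v0 σb)` is nondecreasing in `s`.
-/

open Set

/-- `v` solves the scattering-free two-photon Riccati equation
`v' = -σa v - σb v²` on `[0,T]` with initial value `v₀`
(derivative taken within `[0,T]`, i.e. one-sided at the endpoints). -/
def SolvesRiccati (σa σb : ℝ → ℝ) (T : ℝ) (v : ℝ → ℝ) (v0 : ℝ) : Prop :=
  (∀ s ∈ Set.Icc (0 : ℝ) T,
      HasDerivWithinAt v (-(σa s * v s) - σb s * (v s) ^ 2) (Set.Icc 0 T) s) ∧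
    v 0 = v0

/-- A function continuous on `[0,T]` is interval integrable on every `[0,s] ⊆ [0,T]`. -/
lemma intervalIntegrable_of_mem_Icc {k : ℝ → ℝ} {T s : ℝ} (hk : ContinuousOn k (Set.Icc 0 T))
    (hs : s ∈ Set.Icc (0 : ℝ) T) : IntervalIntegrable k MeasureTheory.volume 0 s := by
  apply ContinuousOn.intervalIntegrable
  rw [Set.uIcc_of_le hs.1]
  exact hk.mono (Set.Icc_subset_Icc_right hs.2)

lemma hasDerivWithinAt_integral_Icc {k : ℝ → ℝ} {T s : ℝ} (hk : ContinuousOn k (Set.Icc 0 T))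
    (hs : s ∈ Set.Icc (0 : ℝ) T) :
    HasDerivWithinAt (fun t => ∫ r in (0 : ℝ)..t, k r) (k s) (Set.Icc 0 T) s := by
  have : Fact (s ∈ Set.Icc (0 : ℝ) T) := ⟨hs⟩
  exact intervalIntegral.integral_hasDerivWithinAt_right (intervalIntegrable_of_mem_Icc hk hs)
    (hk.stronglyMeasurableAtFilter_nhdsWithin measurableSet_Icc s) (hk s hs)

/-- The integrating-factor representation of a solution, valid for either sign of the initial value
and of the coefficients. -/
lemma SolvesRiccati.eq_mul_exp {σa σb v : ℝ → ℝ} {T v0 : ℝ}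
    (hv : SolvesRiccati σa σb T v v0)
    (hk : ContinuousOn (fun r => σa r + σb r * v r) (Set.Icc 0 T)) :
    ∀ s ∈ Set.Icc (0 : ℝ) T,
      v s = v0 * Real.exp (-∫ r in (0 : ℝ)..s, (σa r + σb r * v r)) := by
  have hder : ∀ s ∈ Set.Icc (0 : ℝ) T, HasDerivWithinAt
      (fun t => v t * Real.exp (∫ r in (0 : ℝ)..t, (σa r + σb r * v r))) 0 (Set.Icc 0 T) s := by
    intro s hs
    refine ((hv.1 s hs).mul (hasDerivWithinAt_integral_Icc hk hs).exp).congr_deriv ?_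
    ring
  intro s hs
  have hconst := constant_of_derivWithin_zero
    (fun t ht => (hder t ht).differentiableWithinAt)
    (fun t ht => (hder t (Set.Ico_subset_Icc_self ht)).derivWithin
      (uniqueDiffOn_Icc (ht.1.trans_lt ht.2) t (Set.Ico_subset_Icc_self ht))) s hs
  simp only [intervalIntegral.integral_same, Real.exp_zero, mul_one, hv.2] at hconst
  rw [← hconst, mul_assoc, ← Real.exp_add, add_neg_cancel, Real.exp_zero, mul_one]

theorem stmt8
    (T : ℝ) (hT : 0 < T)
    (σa σb : ℝ → ℝ)
    (hσa_cont : ContinuousOn σa (Set.Icc 0 T))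
    (hσb_cont : ContinuousOn σb (Set.Icc 0 T))
    (hσa_nonneg : ∀ t ∈ Set.Icc (0 : ℝ) T, 0 ≤ σa t)
    (hσb_nonneg : ∀ t ∈ Set.Icc (0 : ℝ) T, 0 ≤ σb t)
    (μ : ℝ → ℝ) (hμ : ∀ t, μ t = Real.exp (-∫ r in (0 : ℝ)..t, σa r))
    (v0 : ℝ) (hv0 : 0 < v0)
    (v : ℝ → ℝ) (hv : SolvesRiccati σa σb T v v0) :
    (∀ s ∈ Set.Icc (0 : ℝ) T,
      v0 * Real.exp (-∫ r in (0 : ℝ)..s, (σa r + v0 * σb r)) ≤ v s) ∧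
    (0 < Real.exp (-∫ r in (0 : ℝ)..T, (σa r + v0 * σb r)) ∧
      ∀ s ∈ Set.Icc (0 : ℝ) T,
        Real.exp (-∫ r in (0 : ℝ)..T, (σa r + v0 * σb r)) * v0 ≤ v s) := by
  have hvc : ContinuousOn v (Set.Icc 0 T) := fun s hs => (hv.1 s hs).continuousWithinAt
  have hk : ContinuousOn (fun r => σa r + σb r * v r) (Set.Icc 0 T) :=
    hσa_cont.add (hσb_cont.mul hvc)
  have hm : ContinuousOn (fun r => σa r + v0 * σb r) (Set.Icc 0 T) :=
    hσa_cont.add (hσb_cont.const_mul v0)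
  have hrep := hv.eq_mul_exp hk
  have hpos : ∀ s ∈ Set.Icc (0 : ℝ) T, 0 < v s := fun s hs => by
    rw [hrep s hs]
    positivity
  have hle : ∀ s ∈ Set.Icc (0 : ℝ) T, v s ≤ v0 := fun s hs => by
    rw [hrep s hs]
    apply mul_le_of_le_one_right hv0.le
    rw [Real.exp_le_one_iff, neg_nonpos]
    refine intervalIntegral.integral_nonneg hs.1 fun r hr => ?_
    have hr' : r ∈ Set.Icc (0 : ℝ) T := ⟨hr.1, hr.2.trans hs.2⟩
    exact add_nonneg (hσa_nonneg r hr') (mul_nonneg (hσb_nonneg r hr') (hpos r hr').le)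
  have hmain : ∀ s ∈ Set.Icc (0 : ℝ) T,
      v0 * Real.exp (-∫ r in (0 : ℝ)..s, (σa r + v0 * σb r)) ≤ v s := fun s hs => by
    rw [hrep s hs]
    refine mul_le_mul_of_nonneg_left (Real.exp_le_exp.2 (neg_le_neg ?_)) hv0.le
    refine intervalIntegral.integral_mono_on hs.1 (intervalIntegrable_of_mem_Icc hk hs)
      (intervalIntegrable_of_mem_Icc hm hs) fun r hr => ?_
    have hr' : r ∈ Set.Icc (0 : ℝ) T := ⟨hr.1, hr.2.trans hs.2⟩
    have := mul_le_mul_of_nonneg_left (hle r hr') (hσb_nonneg r hr')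
    linarith
  refine ⟨hmain, Real.exp_pos _, fun s hs => le_trans ?_ (hmain s hs)⟩
  rw [mul_comm]
  refine mul_le_mul_of_nonneg_left (Real.exp_le_exp.2 (neg_le_neg ?_)) hv0.le
  have hT' : T ∈ Set.Icc (0 : ℝ) T := ⟨hT.le, le_rfl⟩
  have hsub := intervalIntegral.integral_interval_sub_left
    (intervalIntegrable_of_mem_Icc hm hT') (intervalIntegrable_of_mem_Icc hm hs)
  have hnn : 0 ≤ ∫ r in s..T, (σa r + v0 * σb r) :=
    intervalIntegral.integral_nonneg hs.2 fun r hr => by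
      have hr' : r ∈ Set.Icc (0 : ℝ) T := ⟨hs.1.trans hr.1, hr.2⟩
      exact add_nonneg (hσa_nonneg r hr') (mul_nonneg hv0.le (hσb_nonneg r hr'))
  linarith
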